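/- Let n ≥ 2 and s ∈ (0,1). For every u in the Schwartz class on ℝⁿ, one has the endpoint Hardy-type inequality ∫_{ℝⁿ} |x|^{−s} |u(x)| dx ≤ C · ∫_{ℝⁿ}∫_{ℝⁿ} |u(x) − u(y)| / |x−y|^{n+s} dy dx, with a constant C depending only on n and s. -/

import Mathlib

open MeasureTheory Real Set

lemma hardy_radial (n : ℕ) (hn : 2 ≤ n) (s : ℝ) (hs : s ∈ Set.Ioo (0:ℝ) 1) :
    Integrable (fun h : EuclideanSpace ℝ (Fin n) => ‖h‖ ^ (-((n:ℝ) + s)) * min ‖h‖ 1) := by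
  have : Nonempty (Fin n) := ⟨⟨0, by omega⟩⟩
  have : Nontrivial (EuclideanSpace ℝ (Fin n)) := inferInstance
  have h := (integrable_fun_norm_addHaar (volume : Measure (EuclideanSpace ℝ (Fin n)))
    (f := fun r : ℝ => r ^ (-((n:ℝ) + s)) * min r 1))
  refine h.2 ?_
  rw [finrank_euclideanSpace_fin]
  have e : ∀ r : ℝ, 0 < r → r ^ (n-1) * r ^ (-((n:ℝ) + s)) = r ^ (-1 - s) := by
    intro r hr
    rw [← Real.rpow_natCast, ← Real.rpow_add hr, Nat.cast_sub (by omega)]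
    congr 1; push_cast; ring
  rw [← Ioc_union_Ioi_eq_Ioi (zero_le_one (α := ℝ))]
  refine IntegrableOn.union ?_ ?_
  · have h1 : IntegrableOn (fun r : ℝ => r ^ (-s)) (Ioc 0 1) := by
      have := intervalIntegral.intervalIntegrable_rpow' (a := 0) (b := 1) (r := -s)
        (by linarith [hs.2])
      rwa [intervalIntegrable_iff_integrableOn_Ioc_of_le zero_le_one] at this
    refine h1.congr_fun ?_ measurableSet_Ioc
    intro r hr
    have hr0 : 0 < r := hr.1
    simp only [smul_eq_mul]
    rw [← mul_assoc, e r hr0, min_eq_left hr.2]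
    nth_rw 3 [← Real.rpow_one r]
    rw [← Real.rpow_add hr0]; congr 1; ring
  · have h1 : IntegrableOn (fun r : ℝ => r ^ (-1-s)) (Ioi 1) :=
      integrableOn_Ioi_rpow_of_lt (by linarith [hs.1]) one_pos
    refine h1.congr_fun ?_ measurableSet_Ioi
    intro r hr
    have hr1 : 1 < r := hr
    simp only [smul_eq_mul]
    rw [← mul_assoc, e r (by linarith), min_eq_right hr1.le, mul_one]

lemma hardy_tail (n : ℕ) (hn : 2 ≤ n) (s : ℝ) (hs : s ∈ Set.Ioo (0:ℝ) 1) (ρ : ℝ) (hρ : 0 < ρ) :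
    ∫⁻ x : EuclideanSpace ℝ (Fin n), (Ioi ρ).indicator
      (fun r : ℝ => ENNReal.ofReal (r ^ (-((n:ℝ) + s)))) ‖x‖ =
    ENNReal.ofReal (n / s * ρ ^ (-s)) * volume (Metric.ball (0 : EuclideanSpace ℝ (Fin n)) 1) := by
  have : Nonempty (Fin n) := ⟨⟨0, by omega⟩⟩
  have : Nontrivial (EuclideanSpace ℝ (Fin n)) := inferInstance
  set g : ℝ → ℝ := (Ioi ρ).indicator (fun r : ℝ => r ^ (-((n:ℝ) + s))) with hg
  have hg0 : ∀ r, 0 ≤ g r := fun r => indicator_nonneg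
    (fun r hr => Real.rpow_nonneg (hρ.le.trans (le_of_lt hr)) _) r
  have e : ∀ r : ℝ, 0 < r → r ^ (n-1) * r ^ (-((n:ℝ) + s)) = r ^ (-1 - s) := by
    intro r hr
    rw [← Real.rpow_natCast, ← Real.rpow_add hr, Nat.cast_sub (by omega)]
    congr 1; push_cast; ring
  have e2 : EqOn (fun y : ℝ => y ^ (n-1) • g y) ((Ioi ρ).indicator (fun r : ℝ => r ^ (-1 - s)))
      (Ioi 0) := by
    intro r hr
    by_cases h : r ∈ Ioi ρ
    · simpa only [hg, indicator_of_mem h, smul_eq_mul] using e r hr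
    · simp [hg, h]
  have hint1 : IntegrableOn (fun r : ℝ => r ^ (-1-s)) (Ioi ρ) :=
      integrableOn_Ioi_rpow_of_lt (by linarith [hs.1]) hρ
  have hI : Integrable (fun x : EuclideanSpace ℝ (Fin n) => g ‖x‖) := by
    refine (integrable_fun_norm_addHaar (volume : Measure (EuclideanSpace ℝ (Fin n)))
      (f := g)).2 ?_
    rw [finrank_euclideanSpace_fin]
    rw [integrableOn_congr_fun e2 measurableSet_Ioi]
    exact ((integrable_indicator_iff measurableSet_Ioi).2 hint1).integrableOn
  have hV := integral_fun_norm_addHaar (volume : Measure (EuclideanSpace ℝ (Fin n))) g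
  rw [finrank_euclideanSpace_fin, setIntegral_congr_fun measurableSet_Ioi e2,
    setIntegral_indicator measurableSet_Ioi,
    inter_eq_right.2 (Ioi_subset_Ioi hρ.le), integral_Ioi_rpow_of_lt (by linarith [hs.1]) hρ] at hV
  have h2 : ∫⁻ x : EuclideanSpace ℝ (Fin n), (Ioi ρ).indicator
      (fun r : ℝ => ENNReal.ofReal (r ^ (-((n:ℝ) + s)))) ‖x‖ =
      ∫⁻ x : EuclideanSpace ℝ (Fin n), ENNReal.ofReal (g ‖x‖) := by
    refine lintegral_congr fun x => ?_
    by_cases h : ‖x‖ ∈ Ioi ρ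
    · simp [hg, h]
    · simp [hg, h]
  rw [h2, ← ofReal_integral_eq_lintegral_ofReal hI (Filter.Eventually.of_forall fun x => hg0 _), hV]
  rw [← ofReal_measureReal (μ := volume) (s := Metric.ball (0 : EuclideanSpace ℝ (Fin n)) 1)
    (measure_ball_lt_top.ne), ← ENNReal.ofReal_mul (by have := hs.1; positivity)]
  congr 1
  have : s ≠ 0 := hs.1.ne'
  rw [show (-1 - s + 1) = -s by ring]
  simp only [nsmul_eq_mul, smul_eq_mul]
  field_simp

lemma hardy_diff (n : ℕ) (u : SchwartzMap (EuclideanSpace ℝ (Fin n)) ℝ) :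
    ∃ M : ℝ, 0 ≤ M ∧ ∀ h : EuclideanSpace ℝ (Fin n),
      ∫⁻ x, ‖u (x + h) - u x‖ₑ ≤ ENNReal.ofReal (M * min ‖h‖ 1) := by
  obtain ⟨K, hK⟩ : ∃ K : ℝ, ∀ x, (1 + ‖x‖) ^ (n+1) * ‖iteratedFDeriv ℝ 1 u x‖ ≤ K :=
    ⟨_, fun x => SchwartzMap.one_add_le_sup_seminorm_apply (𝕜 := ℝ) (m := (n+1, 1)) le_rfl le_rfl u x⟩
  have hK0 : 0 ≤ K := le_trans (by positivity) (hK 0)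
  have hmv : ∀ x h : EuclideanSpace ℝ (Fin n), ‖h‖ ≤ 1 →
      ‖u (x + h) - u x‖ ≤ K * 2 ^ (n+1) * (1 + ‖x‖) ^ (-((n:ℝ)+1)) * ‖h‖ := by
    intro x h hh
    have := (convex_closedBall x 1).norm_image_sub_le_of_norm_fderiv_le (𝕜 := ℝ) (f := u)
      (C := K * 2 ^ (n+1) * (1 + ‖x‖) ^ (-((n:ℝ)+1))) (x := x) (y := x + h)
      (fun z _ => u.differentiableAt) ?_ (by simp) (by simpa using hh)
    · simpa using this
    · intro z hz
      have h1 := hK z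
      rw [norm_iteratedFDeriv_one] at h1
      have h2 : 1 + ‖x‖ ≤ 2 * (1 + ‖z‖) := by
        have h3 : ‖x‖ ≤ ‖z‖ + ‖x - z‖ := by
          have := norm_add_le z (x - z); simpa using this
        rw [mem_closedBall_iff_norm, norm_sub_rev] at hz
        linarith [norm_nonneg z]
      have h4 : (1 + ‖x‖) ^ (-((n:ℝ)+1)) = ((1 + ‖x‖) ^ (n+1))⁻¹ := by
        rw [Real.rpow_neg (by positivity)]; congr 1
        rw [← Real.rpow_natCast]; push_cast; rfl
      rw [h4, ← div_eq_mul_inv, le_div_iff₀ (by positivity)]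
      calc ‖fderiv ℝ u z‖ * (1 + ‖x‖) ^ (n+1) ≤ ‖fderiv ℝ u z‖ * (2 * (1 + ‖z‖)) ^ (n+1) := by gcongr
        _ = ((1 + ‖z‖) ^ (n+1) * ‖fderiv ℝ u z‖) * 2 ^ (n+1) := by rw [mul_pow]; ring
        _ ≤ _ := by gcongr
  have hI : Integrable (fun x : EuclideanSpace ℝ (Fin n) => (1 + ‖x‖) ^ (-((n:ℝ)+1))) :=
    integrable_one_add_norm (by simp)
  have hu : Integrable u := u.integrable
  obtain ⟨J, hJd⟩ : ∃ J, J = ∫ x : EuclideanSpace ℝ (Fin n), (1 + ‖x‖) ^ (-((n:ℝ)+1)) := ⟨_, rfl⟩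
  have hJ : 0 ≤ J := hJd ▸ integral_nonneg fun x => by positivity
  obtain ⟨B, hBd⟩ : ∃ B, B = ∫ x, ‖u x‖ := ⟨_, rfl⟩
  have hB : 0 ≤ B := hBd ▸ integral_nonneg fun x => by positivity
  refine ⟨K * 2 ^ (n+1) * J + 2 * B, by positivity, fun h => ?_⟩
  have hd : Integrable (fun x => u (x + h) - u x) := (hu.comp_add_right h).sub hu
  rw [← ofReal_integral_norm_eq_lintegral_enorm hd]
  apply ENNReal.ofReal_le_ofReal
  rcases le_total ‖h‖ 1 with hh | hh
  · rw [min_eq_left hh]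
    calc ∫ x, ‖u (x + h) - u x‖ ≤ ∫ x, K * 2 ^ (n+1) * (1 + ‖x‖) ^ (-((n:ℝ)+1)) * ‖h‖ :=
          integral_mono hd.norm ((hI.const_mul _).mul_const _) (fun x => hmv x h hh)
      _ = K * 2 ^ (n+1) * J * ‖h‖ := by rw [integral_mul_const, integral_const_mul, hJd]
      _ ≤ _ := by gcongr; linarith
  · rw [min_eq_right hh, mul_one]
    calc ∫ x, ‖u (x + h) - u x‖ ≤ ∫ x, (‖u (x+h)‖ + ‖u x‖) :=
          integral_mono hd.norm ((hu.comp_add_right h).norm.add hu.norm) (fun x => norm_sub_le _ _)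
      _ = 2 * B := by
          have h1 := integral_add (hu.comp_add_right h).norm hu.norm
          have h2 : ∫ x, ‖u (x + h)‖ = B := hBd ▸ integral_add_right_eq_self (fun x => ‖u x‖) h
          rw [h2] at h1
          rw [h1, ← hBd]; ring
      _ ≤ _ := by linarith [show 0 ≤ K * 2 ^ (n+1) * J by positivity]

lemma hardy_integrable (n : ℕ) (hn : 2 ≤ n) (s : ℝ) (hs : s ∈ Set.Ioo (0:ℝ) 1)
    (u : SchwartzMap (EuclideanSpace ℝ (Fin n)) ℝ) :
    Integrable (fun p : EuclideanSpace ℝ (Fin n) × EuclideanSpace ℝ (Fin n) =>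
      |u p.1 - u p.2| / ‖p.1 - p.2‖ ^ ((n:ℝ) + s)) (volume.prod volume) := by
  obtain ⟨M, hM, hd⟩ := hardy_diff n u
  have hum : Measurable u := u.continuous.measurable
  have hm : Measurable (fun p : EuclideanSpace ℝ (Fin n) × EuclideanSpace ℝ (Fin n) =>
      |u p.1 - u p.2| / ‖p.1 - p.2‖ ^ ((n:ℝ) + s)) := by fun_prop
  refine ⟨hm.aestronglyMeasurable, ?_⟩
  rw [HasFiniteIntegral, lintegral_prod_symm _ hm.enorm.aemeasurable]
  have h1 : ∀ y : EuclideanSpace ℝ (Fin n),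
      ∫⁻ x, ‖|u x - u y| / ‖x - y‖ ^ ((n:ℝ) + s)‖ₑ =
      ∫⁻ h, ‖|u (y + h) - u y| / ‖h‖ ^ ((n:ℝ) + s)‖ₑ := by
    intro y
    rw [← lintegral_add_left_eq_self _ y]
    simp
  simp_rw [h1]
  rw [lintegral_lintegral_swap (by apply Measurable.aemeasurable; unfold Function.uncurry; fun_prop)]
  have h2 : ∀ h : EuclideanSpace ℝ (Fin n),
      ∫⁻ y, ‖|u (y + h) - u y| / ‖h‖ ^ ((n:ℝ) + s)‖ₑ ≤
      ENNReal.ofReal (M * (‖h‖ ^ (-((n:ℝ) + s)) * min ‖h‖ 1)) := by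
    intro h
    have : ∀ y, ‖|u (y + h) - u y| / ‖h‖ ^ ((n:ℝ) + s)‖ₑ =
        ENNReal.ofReal (‖h‖ ^ (-((n:ℝ) + s))) * ‖u (y + h) - u y‖ₑ := by
      intro y
      rw [div_eq_mul_inv, ← Real.rpow_neg (norm_nonneg _), enorm_mul, mul_comm, enorm_abs,
        Real.enorm_of_nonneg (by positivity)]
    simp_rw [this]
    rw [lintegral_const_mul _ (by fun_prop)]
    calc _ ≤ ENNReal.ofReal (‖h‖ ^ (-((n:ℝ) + s))) * ENNReal.ofReal (M * min ‖h‖ 1) := by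
          gcongr; exact hd h
      _ = _ := by rw [← ENNReal.ofReal_mul (by positivity)]; congr 1; ring
  refine (lintegral_mono h2).trans_lt ?_
  have := ((hardy_radial n hn s hs).const_mul M).lintegral_lt_top
  exact this

noncomputable def hardyK (n : ℕ) (s l : ℝ) (x y : EuclideanSpace ℝ (Fin n)) : ENNReal :=
  if ‖y‖ < l * ‖x‖ then ENNReal.ofReal (‖x‖ ^ (-((n:ℝ) + s))) else 0

lemma hardyK_meas (n : ℕ) (s l : ℝ) :
    Measurable (fun p : EuclideanSpace ℝ (Fin n) × EuclideanSpace ℝ (Fin n) =>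
      hardyK n s l p.1 p.2) := by
  unfold hardyK
  exact Measurable.ite (measurableSet_lt (by fun_prop) (by fun_prop)) (by fun_prop) (by fun_prop)

lemma hardyK_meas1 (n : ℕ) (s l : ℝ) (x : EuclideanSpace ℝ (Fin n)) :
    Measurable (fun y => hardyK n s l x y) := by
  unfold hardyK
  exact Measurable.ite (measurableSet_lt (by fun_prop) (by fun_prop)) (by fun_prop) (by fun_prop)

lemma hardyK_meas2 (n : ℕ) (s l : ℝ) (y : EuclideanSpace ℝ (Fin n)) :
    Measurable (fun x => hardyK n s l x y) := by
  unfold hardyK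
  exact Measurable.ite (measurableSet_lt (by fun_prop) (by fun_prop)) (by fun_prop) (by fun_prop)

lemma hardy_L (n : ℕ) (hn : 2 ≤ n) (s : ℝ) (hs : s ∈ Set.Ioo (0:ℝ) 1) (l : ℝ) (hl : 0 < l)
    (u : SchwartzMap (EuclideanSpace ℝ (Fin n)) ℝ) (V : ENNReal) (hVd : V = volume (Metric.ball (0 : EuclideanSpace ℝ (Fin n)) 1)) :
    ∫⁻ x, ∫⁻ y, ENNReal.ofReal |u x| * hardyK n s l x y =
      ENNReal.ofReal (l ^ n) * V * (∫⁻ x, ENNReal.ofReal (‖x‖ ^ (-s) * |u x|))  := by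
  have : Nonempty (Fin n) := ⟨⟨0, by omega⟩⟩
  have : Nontrivial (EuclideanSpace ℝ (Fin n)) := inferInstance
  have hum : Measurable u := u.continuous.measurable
  have hs0 := hs.1
  have hkm := hardyK_meas n s l
  have hkm1 : ∀ x, Measurable (hardyK n s l x) :=
    hardyK_meas1 n s l
  have hkm2 : ∀ y, Measurable (fun x => hardyK n s l x y) :=
    hardyK_meas2 n s l
  rw [← lintegral_const_mul _ (by fun_prop)]
  refine lintegral_congr fun x => ?_
  rw [lintegral_const_mul _ (hkm1 x)]
  have h1 : ∀ y, hardyK n s l x y = (Metric.ball (0:EuclideanSpace ℝ (Fin n)) (l * ‖x‖)).indicator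
      (fun _ => ENNReal.ofReal (‖x‖ ^ (-((n:ℝ) + s)))) y := by
    intro y
    simp [hardyK, indicator]
  simp_rw [h1]
  rw [lintegral_indicator_const measurableSet_ball, Measure.addHaar_ball _ _ (by positivity)]
  rw [finrank_euclideanSpace_fin, ← hVd]
  rw [show ENNReal.ofReal |u x| * (ENNReal.ofReal (‖x‖ ^ (-((n:ℝ) + s))) *
    (ENNReal.ofReal ((l * ‖x‖) ^ n) * V)) = (ENNReal.ofReal |u x| *
      (ENNReal.ofReal (‖x‖ ^ (-((n:ℝ) + s))) * ENNReal.ofReal ((l * ‖x‖) ^ n))) * V by ring,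
    show ENNReal.ofReal (l ^ n) * V * ENNReal.ofReal (‖x‖ ^ (-s) * |u x|) =
      (ENNReal.ofReal (l ^ n) * ENNReal.ofReal (‖x‖ ^ (-s) * |u x|)) * V by ring]
  rw [← ENNReal.ofReal_mul (by positivity), ← ENNReal.ofReal_mul (by positivity),
    ← ENNReal.ofReal_mul (by positivity)]
  congr 2
  have h2 : ‖x‖ ^ (-((n:ℝ) + s)) * ‖x‖ ^ n = ‖x‖ ^ (-s) := by
    rcases eq_or_ne x 0 with rfl | hx
    · rw [norm_zero, Real.zero_rpow (x := -s) (neg_ne_zero.2 hs0.ne'), zero_pow (by omega), mul_zero]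
    · rw [← Real.rpow_natCast, ← Real.rpow_add (norm_pos_iff.2 hx)]
      congr 1; ring
  rw [← h2]; ring

lemma hardy_R (n : ℕ) (hn : 2 ≤ n) (s : ℝ) (hs : s ∈ Set.Ioo (0:ℝ) 1) (l : ℝ) (hl : 0 < l)
    (u : SchwartzMap (EuclideanSpace ℝ (Fin n)) ℝ) (V : ENNReal) (hVd : V = volume (Metric.ball (0 : EuclideanSpace ℝ (Fin n)) 1)) :
    ∫⁻ x, ∫⁻ y, ENNReal.ofReal |u y| * hardyK n s l x y =
      ENNReal.ofReal (n / s * l ^ s) * V * (∫⁻ x, ENNReal.ofReal (‖x‖ ^ (-s) * |u x|))  := by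
  have : Nonempty (Fin n) := ⟨⟨0, by omega⟩⟩
  have : Nontrivial (EuclideanSpace ℝ (Fin n)) := inferInstance
  have hum : Measurable u := u.continuous.measurable
  have hs0 := hs.1
  have hkm := hardyK_meas n s l
  have hkm1 : ∀ x, Measurable (hardyK n s l x) :=
    hardyK_meas1 n s l
  have hkm2 : ∀ y, Measurable (fun x => hardyK n s l x y) :=
    hardyK_meas2 n s l
  rw [lintegral_lintegral_swap (by
    apply Measurable.aemeasurable
    exact (by fun_prop : Measurable fun p : EuclideanSpace ℝ (Fin n) × EuclideanSpace ℝ (Fin n) => ENNReal.ofReal |u p.2|).mul hkm)]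
  rw [← lintegral_const_mul _ (by fun_prop)]
  have hae : ∀ᵐ y : EuclideanSpace ℝ (Fin n), y ≠ 0 := by simp [ae_iff]
  refine lintegral_congr_ae ?_
  filter_upwards [hae] with y hy
  have hy0 := norm_pos_iff.2 hy
  rw [lintegral_const_mul _ (hkm2 y)]
  have h1 : ∀ x, hardyK n s l x y = (Ioi (‖y‖ / l)).indicator
    (fun r : ℝ => ENNReal.ofReal (r ^ (-((n:ℝ) + s)))) ‖x‖ := by
    intro x
    simp [hardyK, indicator, div_lt_iff₀' hl]
  simp_rw [h1]
  rw [hardy_tail n hn s hs _ (by positivity), ← hVd]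
  rw [← mul_assoc, mul_right_comm (ENNReal.ofReal (n / s * l ^ s)), ← ENNReal.ofReal_mul (by positivity),
    ← ENNReal.ofReal_mul (by positivity)]
  congr 2
  rw [Real.div_rpow hy0.le hl.le, Real.rpow_neg hl.le]
  field_simp

lemma hardy_M (n : ℕ) (hn : 2 ≤ n) (s : ℝ) (hs : s ∈ Set.Ioo (0:ℝ) 1) (l : ℝ) (hl : 0 < l)
    (u : SchwartzMap (EuclideanSpace ℝ (Fin n)) ℝ) :
    ∫⁻ x, ∫⁻ y, ENNReal.ofReal |u x - u y| * hardyK n s l x y ≤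
      ENNReal.ofReal ((1 + l) ^ ((n:ℝ) + s)) *
        (∫⁻ x, ∫⁻ y, ENNReal.ofReal (|u x - u y| / ‖x - y‖ ^ ((n:ℝ) + s)))  := by
  have : Nonempty (Fin n) := ⟨⟨0, by omega⟩⟩
  have : Nontrivial (EuclideanSpace ℝ (Fin n)) := inferInstance
  have hum : Measurable u := u.continuous.measurable
  have hs0 := hs.1
  have hkm := hardyK_meas n s l
  have hkm1 : ∀ x, Measurable (hardyK n s l x) :=
    hardyK_meas1 n s l
  have hkm2 : ∀ y, Measurable (fun x => hardyK n s l x y) :=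
    hardyK_meas2 n s l
  have : ∀ x, ENNReal.ofReal ((1 + l) ^ ((n:ℝ) + s)) *
      (∫⁻ y, ENNReal.ofReal (|u x - u y| / ‖x - y‖ ^ ((n:ℝ) + s))) =
      ∫⁻ y, ENNReal.ofReal ((1 + l) ^ ((n:ℝ) + s)) *
        ENNReal.ofReal (|u x - u y| / ‖x - y‖ ^ ((n:ℝ) + s)) :=
    fun x => (lintegral_const_mul _ (by fun_prop)).symm
  rw [← lintegral_const_mul' _ _ ENNReal.ofReal_ne_top]
  simp_rw [this]
  refine lintegral_mono fun x => lintegral_mono fun y => ?_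
  rcases eq_or_ne x y with rfl | hxy
  · simp
  by_cases hlt : ‖y‖ < l * ‖x‖
  · simp only [hardyK, if_pos hlt]
    rw [← ENNReal.ofReal_mul (by positivity), ← ENNReal.ofReal_mul (by positivity)]
    apply ENNReal.ofReal_le_ofReal
    have hx : 0 < ‖x‖ := by
      by_contra hc
      have : ‖x‖ = 0 := le_antisymm (not_lt.1 hc) (norm_nonneg _)
      rw [this, mul_zero] at hlt
      exact absurd hlt (not_lt.2 (norm_nonneg _))
    have hd : 0 < ‖x - y‖ := norm_pos_iff.2 (sub_ne_zero.2 hxy)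
    have hle : ‖x - y‖ ≤ (1 + l) * ‖x‖ := by
      have := norm_sub_le x y
      linarith
    have h3 : ‖x - y‖ ^ ((n:ℝ) + s) ≤ (1 + l) ^ ((n:ℝ) + s) * ‖x‖ ^ ((n:ℝ) + s) := by
      rw [← Real.mul_rpow (by positivity) (by positivity)]
      exact Real.rpow_le_rpow hd.le hle (by positivity)
    rw [Real.rpow_neg hx.le, ← mul_div_assoc, ← div_eq_mul_inv,
      div_le_div_iff₀ (by positivity) (by positivity)]
    calc |u x - u y| * ‖x - y‖ ^ ((n:ℝ) + s)
        ≤ |u x - u y| * ((1 + l) ^ ((n:ℝ) + s) * ‖x‖ ^ ((n:ℝ) + s)) := by gcongr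
      _ = _ := by ring
  · simp [hardyK, hlt]

lemma hardy_main (n : ℕ) (hn : 2 ≤ n) (s : ℝ) (hs : s ∈ Set.Ioo (0:ℝ) 1) (l : ℝ) (hl : 0 < l)
    (u : SchwartzMap (EuclideanSpace ℝ (Fin n)) ℝ) :
    ENNReal.ofReal (l ^ n) * volume (Metric.ball (0 : EuclideanSpace ℝ (Fin n)) 1) *
        (∫⁻ x, ENNReal.ofReal (‖x‖ ^ (-s) * |u x|)) ≤
      ENNReal.ofReal ((1 + l) ^ ((n:ℝ) + s)) *
        (∫⁻ x, ∫⁻ y, ENNReal.ofReal (|u x - u y| / ‖x - y‖ ^ ((n:ℝ) + s))) +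
      ENNReal.ofReal (n / s * l ^ s) * volume (Metric.ball (0 : EuclideanSpace ℝ (Fin n)) 1) *
        (∫⁻ x, ENNReal.ofReal (‖x‖ ^ (-s) * |u x|)) := by
  have hum : Measurable u := u.continuous.measurable
  have hs0 := hs.1
  have hkm := hardyK_meas n s l
  have hL := hardy_L n hn s hs l hl u _ rfl
  have hR := hardy_R n hn s hs l hl u _ rfl
  have hM := hardy_M n hn s hs l hl u
  rw [← hL, ← hR]
  refine le_trans ?_ (add_le_add_left hM _)
  have hm1 : Measurable fun p : EuclideanSpace ℝ (Fin n) × EuclideanSpace ℝ (Fin n) => ENNReal.ofReal |u p.1 - u p.2| * hardyK n s l p.1 p.2 :=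
    (by fun_prop : Measurable fun p : EuclideanSpace ℝ (Fin n) × EuclideanSpace ℝ (Fin n) => ENNReal.ofReal |u p.1 - u p.2|).mul hkm
  rw [← lintegral_add_left hm1.lintegral_prod_right']
  refine lintegral_mono fun x => ?_
  have hm2 : Measurable fun y => ENNReal.ofReal |u x - u y| * hardyK n s l x y :=
    (by fun_prop : Measurable fun y => ENNReal.ofReal |u x - u y|).mul (hardyK_meas1 n s l x)
  simp only []
  rw [← lintegral_add_left hm2]
  refine lintegral_mono fun y => ?_
  rw [← add_mul, ← ENNReal.ofReal_add (by positivity) (by positivity)]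
  gcongr
  have := abs_add_le (u x - u y) (u y)
  simpa using this

/-- the endpoint fractional Hardy inequality
`∫ |x|^{−s}|u(x)| dx ≤ C [u]_{W^{s,1}}` for Schwartz functions on `ℝⁿ`, `n ≥ 2`. -/
theorem stmt16 (n : ℕ) (hn : 2 ≤ n) (s : ℝ) (hs : s ∈ Set.Ioo (0:ℝ) 1) :
    ∃ C > (0:ℝ), ∀ u : SchwartzMap (EuclideanSpace ℝ (Fin n)) ℝ,
      ∫ x, ‖x‖ ^ (-s) * |u x| ≤
        C * ∫ x, ∫ y, |u x - u y| / ‖x - y‖ ^ ((n:ℝ) + s) := by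
  have hs0 := hs.1
  have hs1 := hs.2
  have hn' : (2:ℝ) ≤ n := by exact_mod_cast hn
  set V := volume.real (Metric.ball (0 : EuclideanSpace ℝ (Fin n)) 1) with hV
  have hV0 : 0 < V := ENNReal.toReal_pos (Metric.measure_ball_pos _ _ one_pos).ne'
    measure_ball_lt_top.ne
  have hVE : volume (Metric.ball (0 : EuclideanSpace ℝ (Fin n)) 1) = ENNReal.ofReal V :=
    (ofReal_measureReal measure_ball_lt_top.ne).symm
  set l : ℝ := 2 * n / s with hl
  have hl1 : 1 ≤ l := by rw [hl, le_div_iff₀ hs0]; linarith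
  have hl0 : 0 < l := by linarith
  have hln : n / s * l ^ s ≤ l ^ n / 2 := by
    have h1 : l ^ n = l ^ ((n:ℝ) - s) * l ^ s := by
      rw [← Real.rpow_add hl0]; simp
    have h2 : l ≤ l ^ ((n:ℝ) - s) := by
      calc l = l ^ (1:ℝ) := (Real.rpow_one l).symm
        _ ≤ _ := Real.rpow_le_rpow_of_exponent_le hl1 (by linarith)
    have h3 : (n:ℝ) / s = l / 2 := by rw [hl]; ring
    rw [h1, h3, mul_div_right_comm]
    gcongr
  refine ⟨2 * (1 + l) ^ ((n:ℝ) + s) / (l ^ n * V), by positivity, fun u => ?_⟩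
  have hS := hardy_integrable n hn s hs u
  have hSe : ∫ x, ∫ y, |u x - u y| / ‖x - y‖ ^ ((n:ℝ) + s) =
      ∫ p : EuclideanSpace ℝ (Fin n) × EuclideanSpace ℝ (Fin n),
        |u p.1 - u p.2| / ‖p.1 - p.2‖ ^ ((n:ℝ) + s) ∂(volume.prod volume) :=
    (integral_prod _ hS).symm
  have hSnn : 0 ≤ ∫ x, ∫ y, |u x - u y| / ‖x - y‖ ^ ((n:ℝ) + s) :=
    integral_nonneg fun x => integral_nonneg fun y => by positivity
  by_cases hA : Integrable (fun x => ‖x‖ ^ (-s) * |u x|)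
  swap
  · rw [integral_undef hA]; positivity
  have hmain := hardy_main n hn s hs l hl0 u
  have hSl : (∫⁻ x, ∫⁻ y, ENNReal.ofReal (|u x - u y| / ‖x - y‖ ^ ((n:ℝ) + s))) =
      ENNReal.ofReal (∫ x, ∫ y, |u x - u y| / ‖x - y‖ ^ ((n:ℝ) + s)) := by
    rw [hSe, ofReal_integral_eq_lintegral_ofReal hS
      (Filter.Eventually.of_forall fun p => by positivity),
      lintegral_prod _ hS.1.aemeasurable.ennreal_ofReal]
  have hAnn : 0 ≤ ∫ x, ‖x‖ ^ (-s) * |u x| := integral_nonneg fun x => by positivity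
  rw [hSl, hVE, ← ofReal_integral_eq_lintegral_ofReal hA
      (Filter.Eventually.of_forall fun p => by positivity)] at hmain
  set A := ∫ x, ‖x‖ ^ (-s) * |u x|
  set S := ∫ x, ∫ y, |u x - u y| / ‖x - y‖ ^ ((n:ℝ) + s)
  rw [← ENNReal.ofReal_mul (by positivity), ← ENNReal.ofReal_mul (by positivity),
    ← ENNReal.ofReal_mul (by positivity), ← ENNReal.ofReal_mul (by positivity),
    ← ENNReal.ofReal_mul (by positivity), ← ENNReal.ofReal_add (by positivity) (by positivity),
    ENNReal.ofReal_le_ofReal_iff (by positivity)] at hmain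
  have h5 : n / s * l ^ s * V * A ≤ l ^ n / 2 * V * A := by gcongr
  rw [div_mul_eq_mul_div, le_div_iff₀ (by positivity)]
  linarith
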